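/- Eventual negativity of G: if ρ lies in the interior of the capacity region, then for every M > 0 there is a finite set A ⊆ ℕ^K such that G(x) ≤ −M for all x ∉ A; that is, G(x) → −∞ as Σ_{k=1}^K x_k → ∞. -/

import Mathlib

open scoped BigOperators

namespace FlowCSMA

/-- A set of links is a feasible schedule if its links are pairwise non-conflicting. -/
def Feasible {K : ℕ} (conflict : Fin K → Fin K → Prop) (S : Finset (Fin K)) : Prop :=
  ∀ k ∈ S, ∀ l ∈ S, k ≠ l → ¬ conflict k l

/-- Weight of schedule `i` in state `x`:  `w_i(x) = ∏_{k ∈ S_i} α_k x_k`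
(equal to 1 for the empty schedule). -/
noncomputable def schedWeight {K N : ℕ} (Sched : Fin N → Finset (Fin K)) (α : Fin K → ℝ)
    (x : Fin K → ℕ) (i : Fin N) : ℝ :=
  ∏ k ∈ Sched i, α k * (x k : ℝ)

/-- Selection probability of schedule `i` in state `x`. -/
noncomputable def schedProb {K N : ℕ} (Sched : Fin N → Finset (Fin K)) (α : Fin K → ℝ)
    (x : Fin K → ℕ) (i : Fin N) : ℝ :=
  schedWeight Sched α x i / ∑ j, schedWeight Sched α x j

/-- Throughput of link `k` in state `x`: `φ_k(x) = φ̂_k ∑_{i : k ∈ S_i} p_i(x)`. -/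
noncomputable def throughput {K N : ℕ} (Sched : Fin N → Finset (Fin K)) (α φhat : Fin K → ℝ)
    (x : Fin K → ℕ) (k : Fin K) : ℝ :=
  φhat k * ∑ i ∈ Finset.univ.filter (fun i => k ∈ Sched i), schedProb Sched α x i

/-- The capacity region: vectors `φ` with `φ_k = φ̂_k ∑_{i : k ∈ S_i} p_i`
for some probability vector `p`. -/
def CapacityRegion {K N : ℕ} (Sched : Fin N → Finset (Fin K)) (φhat : Fin K → ℝ) :
    Set (Fin K → ℝ) :=
  {φ | ∃ p : Fin N → ℝ, (∀ i, 0 ≤ p i) ∧ (∑ i, p i) = 1 ∧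
    ∀ k, φ k = φhat k * ∑ i ∈ Finset.univ.filter (fun i => k ∈ Sched i), p i}

/-- `G(x) = ∑_{k : x_k > 0} ((ρ_k - φ_k(x))/φ̂_k) log(α_k x_k)`. -/
noncomputable def G {K N : ℕ} (Sched : Fin N → Finset (Fin K)) (α φhat ρ : Fin K → ℝ)
    (x : Fin K → ℕ) : ℝ :=
  ∑ k ∈ Finset.univ.filter (fun k => 0 < x k),
    ((ρ k - throughput Sched α φhat x k) / φhat k) * Real.log (α k * (x k : ℝ))

/-!
Put `a_k = log (α_k x_k)`, with the convention `log 0 = 0`, and let `W` be the sum of the schedule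
weights. As `log w_i = ∑_{k ∈ S_i} a_k` whenever `w_i > 0`, the schedule law `p(x)` is the Gibbs law
of the energy `∑_{k ∈ S_i} a_k`. Its mean energy is `log W` minus its entropy, hence at least
`log W - log N`, whereas no schedule has energy above `log W`. Therefore every `r` in the capacity
region satisfies `∑_k ((r_k - φ_k(x)) / φ̂_k) a_k ≤ log N`. Taking for `r` the most favourable point
of a ball of radius `δ` around `ρ` yields `G(x) ≤ log N - δ ∑_k |a_k / φ̂_k|`.
-/

section Real

open Real

lemma pos_of_log_mul_natCast_ne_zero {a : ℝ} {n : ℕ} (h : log (a * n) ≠ 0) : 0 < n := by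
  contrapose! h
  simp [Nat.le_zero.1 h]

lemma sum_negMulLog_le_log_card {ι : Type*} [Fintype ι] {p : ι → ℝ} (hp : ∀ i, 0 ≤ p i)
    (hsum : ∑ i, p i = 1) : ∑ i, negMulLog (p i) ≤ log (Fintype.card ι) := by
  have hne : Nonempty ι := by
    by_contra! hempty
    simp at hsum
  set n : ℝ := (Fintype.card ι : ℝ)
  have hn : 0 < n := Nat.cast_pos.2 Fintype.card_pos
  have jensen : n⁻¹ * ∑ i, negMulLog (p i) ≤ negMulLog n⁻¹ := by
    simpa only [smul_eq_mul, ← Finset.mul_sum, hsum, mul_one] using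
      concaveOn_negMulLog.le_map_sum (t := Finset.univ) (w := fun _ => n⁻¹) (p := p)
        (fun _ _ => by positivity) (by simp [n]) fun i _ => hp i
  rw [negMulLog, log_inv, neg_mul_neg] at jensen
  exact le_of_mul_le_mul_left jensen (inv_pos.2 hn)

lemma log_sum_sub_log_card_le_sum_div_mul_log {ι : Type*} [Fintype ι] {w : ι → ℝ}
    (hw : ∀ i, 0 ≤ w i) (hW : 0 < ∑ i, w i) :
    log (∑ i, w i) - log (Fintype.card ι) ≤ ∑ i, w i / (∑ j, w j) * log (w i) := by
  set W := ∑ i, w i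
  have hsum : ∑ i, w i / W = 1 := by rw [← Finset.sum_div, div_self hW.ne']
  have hterm (i : ι) : w i / W * log (w i) = w i / W * log W - negMulLog (w i / W) := by
    rcases eq_or_ne (w i) 0 with hi | hi
    · simp [hi]
    · rw [negMulLog, log_div hi hW.ne']
      ring
  calc log W - log (Fintype.card ι)
      ≤ log W - ∑ i, negMulLog (w i / W) :=
        sub_le_sub_left (sum_negMulLog_le_log_card (fun i => div_nonneg (hw i) hW.le) hsum) _
    _ = ∑ i, w i / W * log (w i) := by
        simp only [hterm, Finset.sum_sub_distrib, ← Finset.sum_mul, hsum, one_mul]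

lemma sum_mul_add_mul_sum_abs_le {ι : Type*} [Fintype ι] {ρ b : ι → ℝ} {δ c : ℝ} (hδ : 0 ≤ δ)
    (h : ∀ r ∈ Metric.closedBall ρ δ, ∑ k, r k * b k ≤ c) :
    ∑ k, ρ k * b k + δ * ∑ k, |b k| ≤ c := by
  let r : ι → ℝ := fun k => ρ k + δ * SignType.sign (b k)
  have hr : r ∈ Metric.closedBall ρ δ := by
    refine (dist_pi_le_iff hδ).2 fun k => ?_
    rw [Real.dist_eq, add_sub_cancel_left, abs_mul, abs_of_nonneg hδ]
    refine mul_le_of_le_one_right hδ ?_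
    cases SignType.sign (b k) <;> simp
  calc ∑ k, ρ k * b k + δ * ∑ k, |b k| = ∑ k, r k * b k := by
        simp only [r, add_mul, mul_assoc, sign_mul_self, Finset.sum_add_distrib, Finset.mul_sum]
    _ ≤ c := h r hr

end Real

section Filter

open Filter

lemma tendsto_sum_coprodᵢ_atTop {ι : Type*} [Fintype ι] {β : ι → Type*} {M : Type*}
    [AddCommMonoid M] [PartialOrder M] [IsOrderedAddMonoid M] {l : ∀ i, Filter (β i)}
    {f : ∀ i, β i → M} (hf : ∀ i y, 0 ≤ f i y) (htop : ∀ i, Tendsto (f i) (l i) atTop) :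
    Tendsto (fun x : ∀ i, β i => ∑ i, f i (x i)) (Filter.coprodᵢ l) atTop :=
  tendsto_iSup.2 fun i =>
    tendsto_atTop_mono
      (fun x => Finset.single_le_sum (f := fun j => f j (x j)) (fun j _ => hf j (x j))
        (Finset.mem_univ i))
      ((htop i).comp tendsto_comap)

lemma tendsto_abs_log_mul_natCast_div_atTop {a b : ℝ} (ha : 0 < a) (hb : b ≠ 0) :
    Tendsto (fun n : ℕ => |Real.log (a * n) / b|) atTop atTop := by
  simp only [abs_div]
  exact (tendsto_abs_atTop_atTop.comp <| Real.tendsto_log_atTop.comp <|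
    tendsto_natCast_atTop_atTop.const_mul_atTop ha).atTop_div_const (abs_pos.2 hb)

end Filter

lemma Feasible.mono {K : ℕ} {conflict : Fin K → Fin K → Prop} {S T : Finset (Fin K)}
    (hT : Feasible conflict T) (hST : S ⊆ T) : Feasible conflict S :=
  fun k hk l hl => hT k (hST hk) l (hST hl)

lemma isLowerSet_range_of_feasible {K : ℕ} {ι : Type*} {conflict : Fin K → Fin K → Prop}
    {Sched : ι → Finset (Fin K)} (hfeas : ∀ i, Feasible conflict (Sched i))
    (hsurj : ∀ S, Feasible conflict S → ∃ i, Sched i = S) : IsLowerSet (Set.range Sched) := by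
  rintro _ S hS ⟨i, rfl⟩
  exact hsurj S ((hfeas i).mono hS)

/-- The fraction of time link `k` is active when schedule `i` is used with probability `p i`; the
points of the capacity region and the throughput have coordinates `φhat k * activity Sched p k`. -/
def activity {K N : ℕ} (Sched : Fin N → Finset (Fin K)) (p : Fin N → ℝ) (k : Fin K) : ℝ :=
  ∑ i with k ∈ Sched i, p i

section Schedules

open Real

variable {K N : ℕ} {Sched : Fin N → Finset (Fin K)} {α φhat ρ : Fin K → ℝ}

lemma sum_activity_mul (p : Fin N → ℝ) (a : Fin K → ℝ) :
    ∑ k, activity Sched p k * a k = ∑ i, p i * ∑ k ∈ Sched i, a k := by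
  simp only [activity, Finset.sum_mul, Finset.mul_sum]
  exact Finset.sum_comm' (by simp)

lemma schedWeight_nonneg (hα : ∀ k, 0 ≤ α k) (x : Fin K → ℕ) (i : Fin N) :
    0 ≤ schedWeight Sched α x i :=
  Finset.prod_nonneg fun k _ => mul_nonneg (hα k) (Nat.cast_nonneg _)

lemma schedWeight_le_sum (hα : ∀ k, 0 ≤ α k) (x : Fin K → ℕ) (i : Fin N) :
    schedWeight Sched α x i ≤ ∑ j, schedWeight Sched α x j :=
  Finset.single_le_sum (fun j _ => schedWeight_nonneg hα x j) (Finset.mem_univ i)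

lemma sum_schedWeight_pos (hempty : ∅ ∈ Set.range Sched) (hα : ∀ k, 0 ≤ α k) (x : Fin K → ℕ) :
    0 < ∑ j, schedWeight Sched α x j := by
  obtain ⟨i, hi⟩ := hempty
  have hone : schedWeight Sched α x i = 1 := by rw [schedWeight, hi, Finset.prod_empty]
  exact zero_lt_one.trans_le (hone ▸ schedWeight_le_sum hα x i)

lemma log_schedWeight {x : Fin K → ℕ} {i : Fin N} (hi : schedWeight Sched α x i ≠ 0) :
    log (schedWeight Sched α x i) = ∑ k ∈ Sched i, log (α k * x k) :=
  log_prod (Finset.prod_ne_zero_iff.1 hi)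

lemma schedProb_mul_log_schedWeight (x : Fin K → ℕ) (i : Fin N) :
    schedProb Sched α x i * log (schedWeight Sched α x i) =
      schedProb Sched α x i * ∑ k ∈ Sched i, log (α k * x k) := by
  rcases eq_or_ne (schedWeight Sched α x i) 0 with hi | hi
  · simp [schedProb, hi]
  · rw [log_schedWeight hi]

lemma log_sum_schedWeight_sub_le_sum_activity (hempty : ∅ ∈ Set.range Sched)
    (hα : ∀ k, 0 ≤ α k) (x : Fin K → ℕ) :
    log (∑ j, schedWeight Sched α x j) - log N ≤
      ∑ k, activity Sched (schedProb Sched α x) k * log (α k * x k) := by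
  rw [sum_activity_mul]
  simp only [← schedProb_mul_log_schedWeight]
  simpa only [Fintype.card_fin, schedProb] using log_sum_sub_log_card_le_sum_div_mul_log
    (schedWeight_nonneg hα x) (sum_schedWeight_pos hempty hα x)

/- Links with `x k = 0` contribute `log 0 = 0`, so they can be removed from the schedule, which
makes its weight positive. -/
lemma sum_log_le_log_sum_schedWeight (hlower : IsLowerSet (Set.range Sched)) (hα : ∀ k, 0 < α k)
    (x : Fin K → ℕ) (i : Fin N) :
    ∑ k ∈ Sched i, log (α k * x k) ≤ log (∑ j, schedWeight Sched α x j) := by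
  obtain ⟨j, hj⟩ : (Sched i).filter (fun k => 0 < x k) ∈ Set.range Sched :=
    hlower (Finset.filter_subset _ _) ⟨i, rfl⟩
  have hpos : 0 < schedWeight Sched α x j := by
    refine Finset.prod_pos fun k hk => mul_pos (hα k) (Nat.cast_pos.2 ?_)
    rw [hj] at hk
    exact (Finset.mem_filter.1 hk).2
  calc ∑ k ∈ Sched i, log (α k * x k) = ∑ k ∈ Sched j, log (α k * x k) := by
        rw [hj, Finset.sum_filter_of_ne fun _ _ => pos_of_log_mul_natCast_ne_zero]
    _ = log (schedWeight Sched α x j) := (log_schedWeight hpos.ne').symm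
    _ ≤ log (∑ j, schedWeight Sched α x j) :=
        log_le_log hpos (schedWeight_le_sum (fun k => (hα k).le) x j)

lemma sum_mul_log_div_le_log_sum_schedWeight (hlower : IsLowerSet (Set.range Sched))
    (hα : ∀ k, 0 < α k) (hφ : ∀ k, φhat k ≠ 0) {r : Fin K → ℝ}
    (hr : r ∈ CapacityRegion Sched φhat) (x : Fin K → ℕ) :
    ∑ k, r k * (log (α k * x k) / φhat k) ≤ log (∑ j, schedWeight Sched α x j) := by
  obtain ⟨q, hq_nonneg, hq_sum, hq⟩ := hr
  calc ∑ k, r k * (log (α k * x k) / φhat k)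
      = ∑ k, activity Sched q k * log (α k * x k) := by
        refine Finset.sum_congr rfl fun k _ => ?_
        rw [hq k, ← activity]
        field_simp [hφ k]
    _ = ∑ i, q i * ∑ k ∈ Sched i, log (α k * x k) := sum_activity_mul _ _
    _ ≤ ∑ i, q i * log (∑ j, schedWeight Sched α x j) := by
        gcongr with i
        · exact hq_nonneg i
        · exact sum_log_le_log_sum_schedWeight hlower hα x i
    _ = log (∑ j, schedWeight Sched α x j) := by rw [← Finset.sum_mul, hq_sum, one_mul]

lemma G_eq_sum_sub_sum_activity (hφ : ∀ k, φhat k ≠ 0) (x : Fin K → ℕ) :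
    G Sched α φhat ρ x = ∑ k, ρ k * (log (α k * x k) / φhat k) -
      ∑ k, activity Sched (schedProb Sched α x) k * log (α k * x k) := by
  rw [G, Finset.sum_filter_of_ne fun _ _ hk =>
    pos_of_log_mul_natCast_ne_zero (right_ne_zero_of_mul hk), ← Finset.sum_sub_distrib]
  refine Finset.sum_congr rfl fun k _ => ?_
  rw [throughput, ← activity]
  field_simp [hφ k]

lemma G_le_log_sub_mul_sum_abs_log (hlower : IsLowerSet (Set.range Sched)) (hα : ∀ k, 0 < α k)
    (hφ : ∀ k, φhat k ≠ 0) {δ : ℝ} (hδ : 0 ≤ δ)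
    (hball : Metric.closedBall ρ δ ⊆ CapacityRegion Sched φhat) (x : Fin K → ℕ) :
    G Sched α φhat ρ x ≤ log N - δ * ∑ k, |log (α k * x k) / φhat k| := by
  have hempty : ∅ ∈ Set.range Sched := by
    obtain ⟨p, -, hp, -⟩ := hball (Metric.mem_closedBall_self hδ)
    obtain ⟨i, -, -⟩ := Finset.exists_ne_zero_of_sum_ne_zero (hp.trans_ne one_ne_zero)
    exact hlower (Finset.empty_subset _) ⟨i, rfl⟩
  have hupper := sum_mul_add_mul_sum_abs_le hδ fun r hr =>
    sum_mul_log_div_le_log_sum_schedWeight hlower hα hφ (hball hr) x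
  have hgibbs := log_sum_schedWeight_sub_le_sum_activity hempty (fun k => (hα k).le) x
  rw [G_eq_sum_sub_sum_activity hφ]
  linarith

end Schedules

open Filter in
theorem G_tendsto_neg_infty_general {K N : ℕ} {Sched : Fin N → Finset (Fin K)}
    (hlower : IsLowerSet (Set.range Sched)) {α φhat ρ : Fin K → ℝ} (hα : ∀ k, 0 < α k)
    (hφ : ∀ k, φhat k ≠ 0) (hint : ρ ∈ interior (CapacityRegion Sched φhat)) :
    Tendsto (G Sched α φhat ρ) cofinite atBot := by
  obtain ⟨δ, hδ, hball⟩ :=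
    Metric.nhds_basis_closedBall.mem_iff.1 (mem_interior_iff_mem_nhds.1 hint)
  have hsum : Tendsto (fun x : Fin K → ℕ => ∑ k, |Real.log (α k * x k) / φhat k|)
      cofinite atTop := by
    simpa only [← Nat.cofinite_eq_atTop, coprodᵢ_cofinite] using
      tendsto_sum_coprodᵢ_atTop (fun _ _ => abs_nonneg _) fun k =>
        tendsto_abs_log_mul_natCast_div_atTop (hα k) (hφ k)
  refine tendsto_atBot_mono (G_le_log_sub_mul_sum_abs_log hlower hα hφ hδ.le hball) ?_
  simp only [sub_eq_add_neg]
  exact tendsto_atBot_add_const_left _ _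
    (tendsto_neg_atTop_atBot.comp (hsum.const_mul_atTop hδ))

/-- Eventual negativity of `G`: if `ρ` lies in the interior of the capacity region, then
for every `M > 0` there is a finite set `A ⊆ ℕ^K` with `G(x) ≤ -M` for all `x ∉ A`;
that is, `G(x) → -∞` as `∑_k x_k → ∞`. -/
theorem G_tendsto_neg_infty
    {K N : ℕ} (hK : 0 < K) (hN : 0 < N)
    (conflict : Fin K → Fin K → Prop)
    (hsymm : ∀ k l, conflict k l → conflict l k)
    (Sched : Fin N → Finset (Fin K))
    (hfeas : ∀ i, Feasible conflict (Sched i))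
    (hinj : Function.Injective Sched)
    (hsurj : ∀ S : Finset (Fin K), Feasible conflict S → ∃ i, Sched i = S)
    (hS0 : Sched ⟨0, hN⟩ = ∅)
    (α φhat : Fin K → ℝ) (hα : ∀ k, 0 < α k) (hφ : ∀ k, 0 < φhat k)
    (ρ : Fin K → ℝ) (hρ : ∀ k, 0 < ρ k)
    (hint : ρ ∈ interior (CapacityRegion Sched φhat)) :
    ∀ M : ℝ, 0 < M → ∃ A : Set (Fin K → ℕ), A.Finite ∧
      ∀ x ∉ A, G Sched α φhat ρ x ≤ -M := by
  have hG := G_tendsto_neg_infty_general (isLowerSet_range_of_feasible hfeas hsurj) hα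
    (fun k => (hφ k).ne') hint
  exact fun M _ => ⟨_, Filter.tendsto_atBot.1 hG (-M), fun _ => not_not.1⟩

end FlowCSMA
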